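/- (Dayton–Zeng conjecture, breadth one case) Let F be a polynomial system with isolated singular solution x̂ₑ of multiplicity μ ≥ 2 whose Jacobian F'(x̂ₑ) has corank one with unit null vector r₁. Then for any h ∈ ℂⁿ with h*r₁ ≠ 0, the deflated system J(x,ν) = (F(x), F'(x)·ν, h*ν − 1) has (x̂ₑ, r₁/(h*r₁)) as an isolated singular solution of multiplicity exactly μ − 1. -/

import Mathlib

open MvPolynomial Matrix

/-- `dEval p α f` is the value of the scaled differential operator
`D(α) = (1/α!) ∂^α` applied to `f` and evaluated at the point `p`
(equivalently, the `α`-th Taylor coefficient of `f` at `p`). -/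
noncomputable def dEval {σ : Type*} [Fintype σ] [DecidableEq σ]
    (p : σ → ℂ) (α : σ →₀ ℕ) (f : MvPolynomial σ ℂ) : ℂ :=
  MvPolynomial.coeff α
    (MvPolynomial.aeval (fun i => MvPolynomial.X i + MvPolynomial.C (p i)) f)

/-- The value at `p` on `f` of the differential operator with coefficient vector `c`,
`L = ∑ c_α D(α)`. -/
noncomputable def applyOp {σ : Type*} [Fintype σ] [DecidableEq σ]
    (c : (σ →₀ ℕ) →₀ ℂ) (p : σ → ℂ) (f : MvPolynomial σ ℂ) : ℂ :=
  Finsupp.linearCombination ℂ (fun α => dEval p α f) c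

/-- The Max Noether (local dual) space of an ideal `I` at the point `p`,
represented by the coefficient vectors of differential operators annihilating `I` at `p`. -/
noncomputable def dualSpace {σ : Type*} [Fintype σ] [DecidableEq σ]
    (p : σ → ℂ) (I : Ideal (MvPolynomial σ ℂ)) : Submodule ℂ ((σ →₀ ℕ) →₀ ℂ) :=
  ⨅ f ∈ I, LinearMap.ker (Finsupp.linearCombination ℂ (fun α => dEval p α f))

/-- The truncation of the dual space to operators of order at most `k`. -/
noncomputable def dualSpaceLe {σ : Type*} [Fintype σ] [DecidableEq σ]
    (p : σ → ℂ) (I : Ideal (MvPolynomial σ ℂ)) (k : ℕ) : Submodule ℂ ((σ →₀ ℕ) →₀ ℂ) :=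
  dualSpace p I ⊓ Finsupp.supported ℂ ℂ {α | (α.sum fun _ m => m) ≤ k}

/-- The anti-differentiation map `Φⱼ` on coefficient vectors of differential operators:
`(Φⱼ c)(β) = c(β + eⱼ)`. -/
noncomputable def shiftOp {σ : Type*} [DecidableEq σ] (j : σ)
    (c : (σ →₀ ℕ) →₀ ℂ) : (σ →₀ ℕ) →₀ ℂ :=
  Finsupp.comapDomain (fun β => β + Finsupp.single j 1) c
    ((add_left_injective _).injOn)

/-- Jacobian matrix of a polynomial system at a point. -/
noncomputable def jacMat {σ : Type*} [Fintype σ] [DecidableEq σ]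
    (F : σ → MvPolynomial σ ℂ) (p : σ → ℂ) : Matrix σ σ ℂ :=
  Matrix.of fun i j => MvPolynomial.eval p (MvPolynomial.pderiv j (F i))

/-- The deflated system `J(x,ν) = (F(x), F'(x)·ν, h*ν − 1)`, a system of `2n+1` polynomials
in the `2n` variables `(x, ν)`. -/
noncomputable def deflSys {n : ℕ} (F : Fin n → MvPolynomial (Fin n) ℂ) (h : Fin n → ℂ) :
    (Fin n ⊕ (Fin n ⊕ Unit)) → MvPolynomial (Fin n ⊕ Fin n) ℂ :=
  Sum.elim (fun i => MvPolynomial.rename Sum.inl (F i))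
    (Sum.elim
      (fun i => ∑ j, MvPolynomial.rename Sum.inl (MvPolynomial.pderiv j (F i)) *
          MvPolynomial.X (Sum.inr j))
      (fun _ => (∑ j, MvPolynomial.C (starRingEnd ℂ (h j)) * MvPolynomial.X (Sum.inr j)) - 1))

/-!
Let `I` be the ideal of `F`, `𝔪` the maximal ideal at the solution `p`, and `L = ℓ ⬝ᵥ (x - p)` a
linear form whose differential does not vanish on the kernel of the Jacobian. As this kernel is a
line, `L` generates the polynomial ring modulo `I ⊔ 𝔪 ^ k` for every `k`, so the multiplicity of `p`
is the largest order to which a curve parametrized by `L` solves the system. The same holds for the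
deflated system at `(p, ν)`, with the same `L`, and the two orders differ by one. A curve `x`
solving `F` to order `d + 1` solves the deflated system to order `d` together with its velocity
`x'`. Conversely, let `(x, v)` solve the deflated system to order `d`. The curve `x` alone only
solves `F` to order `d`, but the equations `F'(x) (x' - v) ≡ 0` and `ℓ ⬝ᵥ (x' - v) ≡ 0` force
`x' ≡ v` to order `d - 1`. The integral `y` of `v` with `y(0) = p` therefore agrees with `x` to
order `d`, the derivative `F'(y) v` of `F(y)` vanishes to order `d`, and `F(y)` vanishes to order
`d + 1`.
-/

open scoped Polynomial

section Polynomial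

variable {R σ ι : Type*} [CommRing R]

theorem X_pow_succ_dvd_of_X_pow_dvd_derivative [IsDomain R] [CharZero R] {P : R[X]} {d : ℕ}
    (h0 : P.coeff 0 = 0) (h : Polynomial.X ^ d ∣ Polynomial.derivative P) :
    Polynomial.X ^ (d + 1) ∣ P := by
  rw [Polynomial.X_pow_dvd_iff] at h ⊢
  rintro (_ | k) hk
  · exact h0
  · have hcoeff := h k (Nat.lt_of_succ_lt_succ hk)
    rw [Polynomial.coeff_derivative] at hcoeff
    exact (mul_eq_zero.1 hcoeff).resolve_right (Nat.cast_add_one_ne_zero k)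

theorem X_pow_dvd_derivative_of_X_pow_succ_dvd {P : R[X]} {d : ℕ}
    (h : Polynomial.X ^ (d + 1) ∣ P) : Polynomial.X ^ d ∣ Polynomial.derivative P := by
  simpa using Polynomial.pow_sub_one_dvd_derivative_of_pow_dvd h

theorem exists_coeff_zero_eq_and_derivative_eq {K : Type*} [Field K] [CharZero K] (a : K)
    (P : K[X]) : ∃ Q : K[X], Q.coeff 0 = a ∧ Polynomial.derivative Q = P := by
  induction P using Polynomial.induction_on' generalizing a with
  | add P₁ P₂ h₁ h₂ =>
    obtain ⟨Q₁, hQ₁, rfl⟩ := h₁ a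
    obtain ⟨Q₂, hQ₂, rfl⟩ := h₂ 0
    exact ⟨Q₁ + Q₂, by simp [hQ₁, hQ₂], by simp⟩
  | monomial n b =>
    refine ⟨Polynomial.C a + Polynomial.monomial (n + 1) (b / (n + 1)), by simp, ?_⟩
    have hn : (n + 1 : K) ≠ 0 := Nat.cast_add_one_ne_zero n
    simp [hn]

theorem X_pow_dvd_of_X_pow_dvd_mulVec [IsDomain R] [Fintype σ] {M : Matrix ι σ R[X]}
    (hM : ∀ u, M.map Polynomial.constantCoeff *ᵥ u = 0 → u = 0) {d : ℕ} {w : σ → R[X]}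
    (hw : ∀ i, Polynomial.X ^ d ∣ (M *ᵥ w) i) (j : σ) : Polynomial.X ^ d ∣ w j := by
  induction d generalizing j with
  | zero => simp
  | succ d ih =>
    choose v hv using ih fun i => (pow_dvd_pow _ d.le_succ).trans (hw i)
    obtain rfl : w = (Polynomial.X ^ d : R[X]) • v := funext hv
    have hXd : (Polynomial.X : R[X]) ^ d ≠ 0 := pow_ne_zero _ Polynomial.X_ne_zero
    have hv0 : Polynomial.constantCoeff ∘ v = 0 := hM _ <| funext fun i => by
      have hdvd := hw i
      rw [Matrix.mulVec_smul, Pi.smul_apply, smul_eq_mul, pow_succ,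
        mul_dvd_mul_iff_left hXd, Polynomial.X_dvd_iff] at hdvd
      rw [← RingHom.map_mulVec]
      exact hdvd
    rw [pow_succ]
    exact mul_dvd_mul_left _ (Polynomial.X_dvd_iff.2 (congrFun hv0 j))

end Polynomial

section Jacobian

variable {σ ι R B : Type*} [CommRing R] [CommRing B] [Algebra R B]

/-- The gradient of `f` at a point `x` with coordinates in an `R`-algebra, which may be a ring of
polynomials when `x` is a curve. -/
noncomputable def polyGradient (f : MvPolynomial σ R) (x : σ → B) : σ → B :=
  fun j => aeval x (pderiv j f)

/-- The Jacobian matrix of the system `F` at a point `x` with coordinates in an `R`-algebra;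
`jacMat` is the case of a square system at a complex point. -/
noncomputable def polyJacobian (F : ι → MvPolynomial σ R) (x : σ → B) : Matrix ι σ B :=
  Matrix.of fun i => polyGradient (F i) x

theorem polyGradient_C (a : R) (x : σ → B) : polyGradient (C a) x = 0 := by
  funext j
  simp [polyGradient]

theorem polyGradient_add (f g : MvPolynomial σ R) (x : σ → B) :
    polyGradient (f + g) x = polyGradient f x + polyGradient g x := by
  funext j
  simp [polyGradient]

theorem polyGradient_mul_X [DecidableEq σ] (f : MvPolynomial σ R) (i : σ) (x : σ → B) :
    polyGradient (f * X i) x = x i • polyGradient f x + Pi.single i (aeval x f) := by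
  funext j
  obtain rfl | hij := eq_or_ne i j
  · simp [polyGradient, add_comm]
  · simp [polyGradient, pderiv_X_of_ne hij, hij.symm]

theorem aeval_sub_aeval_mem {J : Ideal B} {x y : σ → B} (h : ∀ i, x i - y i ∈ J)
    (f : MvPolynomial σ R) : aeval x f - aeval y f ∈ J := by
  have hxy : Ideal.Quotient.mkₐ R J ∘ x = Ideal.Quotient.mkₐ R J ∘ y :=
    funext fun i => Ideal.Quotient.eq.2 (h i)
  rw [← Ideal.Quotient.eq, ← Ideal.Quotient.mkₐ_eq_mk R, comp_aeval_apply, comp_aeval_apply]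
  exact congrArg (fun z => aeval z f) hxy

theorem polyGradient_rename_inl {τ : Type*} (f : MvPolynomial σ R) (z : σ ⊕ τ → B) :
    polyGradient (rename Sum.inl f) z = Sum.elim (polyGradient f (z ∘ Sum.inl)) 0 := by
  classical
  funext k
  rcases k with k | k
  · simp [polyGradient, pderiv_rename Sum.inl_injective, aeval_rename]
  · have hk : Sum.inr k ∉ (rename (Sum.inl : σ → σ ⊕ τ) f).vars := fun h => by
      simpa using vars_rename Sum.inl f h
    simp [polyGradient, pderiv_eq_zero_of_notMem_vars hk]

variable [Fintype σ]

theorem aeval_add_sub_sub_polyGradient_mem_sq {J : Ideal B} {x v : σ → B} (hv : ∀ i, v i ∈ J)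
    (f : MvPolynomial σ R) :
    aeval (x + v) f - aeval x f - polyGradient f x ⬝ᵥ v ∈ J ^ 2 := by
  classical
  induction f using MvPolynomial.induction_on with
  | C a => simp [polyGradient_C]
  | add f g hf hg =>
    convert add_mem hf hg using 1
    rw [polyGradient_add, add_dotProduct, map_add, map_add]
    ring
  | mul_X f i hf =>
    have hgrad : polyGradient f x ⬝ᵥ v ∈ J :=
      Ideal.sum_mem _ fun j _ => J.mul_mem_left _ (hv j)
    convert add_mem (Ideal.mul_mem_left _ (x i + v i) hf)
      (sq J ▸ Ideal.mul_mem_mul hgrad (hv i)) using 1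
    rw [polyGradient_mul_X, add_dotProduct, smul_dotProduct, single_dotProduct, map_mul, map_mul,
      aeval_X, aeval_X, Pi.add_apply, smul_eq_mul]
    ring

theorem polyGradient_dotProduct_sub_mem {J : Ideal B} {x y : σ → B} (h : ∀ i, x i - y i ∈ J)
    (f : MvPolynomial σ R) (v : σ → B) :
    polyGradient f x ⬝ᵥ v - polyGradient f y ⬝ᵥ v ∈ J := by
  rw [← sub_dotProduct]
  exact Ideal.sum_mem _ fun j _ => J.mul_mem_right _ (aeval_sub_aeval_mem h (pderiv j f))

theorem derivative_aeval (y : σ → R[X]) (f : MvPolynomial σ R) :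
    Polynomial.derivative (aeval y f) =
      polyGradient f y ⬝ᵥ fun j => Polynomial.derivative (y j) := by
  classical
  induction f using MvPolynomial.induction_on with
  | C a => simp [polyGradient_C, Polynomial.algebraMap_eq]
  | add f g hf hg => rw [polyGradient_add, add_dotProduct, map_add, map_add, hf, hg]
  | mul_X f i hf =>
    rw [polyGradient_mul_X, add_dotProduct, smul_dotProduct, single_dotProduct, map_mul, aeval_X,
      Polynomial.derivative_mul, hf, smul_eq_mul, mul_comm]

end Jacobian

section Curve

variable {R σ ι : Type*} [CommRing R]

theorem coeff_zero_aeval {y : σ → R[X]} {p : σ → R} (hy : ∀ i, (y i).coeff 0 = p i)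
    (f : MvPolynomial σ R) : (aeval y f).coeff 0 = aeval p f := by
  obtain rfl : (fun i => (y i).coeff 0) = p := funext hy
  simp only [Polynomial.coeff_zero_eq_aeval_zero]
  exact comp_aeval_apply _ _ _

theorem polyJacobian_map_constantCoeff {F : ι → MvPolynomial σ R} {y : σ → R[X]} {p : σ → R}
    (hy : ∀ i, (y i).coeff 0 = p i) :
    (polyJacobian F y).map Polynomial.constantCoeff = polyJacobian F p :=
  Matrix.ext fun _ _ => coeff_zero_aeval hy _

/-- A solution of the system `G` at `p` to order `d`, as a polynomial curve `y` parametrized by the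
local parameter `L`: both equations hold modulo `X ^ d`. -/
structure IsJet (G : ι → MvPolynomial σ R) (p : σ → R) (L : MvPolynomial σ R) (d : ℕ)
    (y : σ → R[X]) : Prop where
  coeff_zero : ∀ i, (y i).coeff 0 = p i
  dvd_system : ∀ r, Polynomial.X ^ d ∣ aeval y (G r)
  dvd_parameter : Polynomial.X ^ d ∣ aeval y L - Polynomial.X

variable {G : ι → MvPolynomial σ R} {p : σ → R} {L : MvPolynomial σ R} {d : ℕ} {y : σ → R[X]}

theorem IsJet.mono {e : ℕ} (h : IsJet G p L e y) (hde : d ≤ e) : IsJet G p L d y where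
  coeff_zero := h.coeff_zero
  dvd_system r := (pow_dvd_pow _ hde).trans (h.dvd_system r)
  dvd_parameter := (pow_dvd_pow _ hde).trans h.dvd_parameter

theorem IsJet.dvd_aeval (h : IsJet G p L d y) {f : MvPolynomial σ R}
    (hf : f ∈ Ideal.span (Set.range G)) : Polynomial.X ^ d ∣ aeval y f := by
  have hle : Ideal.span (Set.range G) ≤ (Ideal.span {Polynomial.X ^ d}).comap (aeval y) :=
    Ideal.span_le.2 <| Set.range_subset_iff.2 fun r =>
      Ideal.mem_span_singleton.2 (h.dvd_system r)
  exact Ideal.mem_span_singleton.1 (hle hf)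

theorem IsJet.dvd_aeval_pow_sub (h : IsJet G p L d y) (i : ℕ) :
    Polynomial.X ^ d ∣ aeval y (L ^ i) - Polynomial.X ^ i := by
  rw [map_pow]
  exact h.dvd_parameter.trans (sub_dvd_pow_sub_pow _ _ i)

end Curve

section LinearForm

variable {R σ : Type*} [CommRing R]

theorem aeval_C_comp (p : σ → R) (f : MvPolynomial σ R) :
    aeval (fun i => (C (p i) : MvPolynomial σ R)) f = C (aeval p f) :=
  aeval_algebraMap_apply _ p f

variable [Fintype σ]

/-- The polynomial function `x ↦ v ⬝ᵥ (x - p)`, linear in `v`. -/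
noncomputable def linFormAt (p : σ → R) : (σ → R) →ₗ[R] MvPolynomial σ R :=
  Fintype.linearCombination R fun i => X i - C (p i)

theorem linFormAt_apply (p v : σ → R) : linFormAt p v = ∑ i, v i • (X i - C (p i)) := rfl

theorem polyGradient_linFormAt {B : Type*} [CommRing B] [Algebra R B] (p ℓ : σ → R) (x : σ → B) :
    polyGradient (linFormAt p ℓ) x = algebraMap R B ∘ ℓ := by
  classical
  funext j
  simp [polyGradient, linFormAt_apply, pderiv_X, Pi.single_apply, Algebra.algebraMap_eq_smul_one]

theorem aeval_linFormAt_self (p ℓ : σ → R) : aeval p (linFormAt p ℓ) = 0 := by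
  simp [linFormAt_apply]

end LinearForm

section LocalParameter

variable {K σ ι : Type*} [Field K]

theorem X_pow_dvd_aeval_of_mem_vanishingIdeal_pow {y : σ → K[X]} {p : σ → K}
    (hy : ∀ i, (y i).coeff 0 = p i) {k : ℕ} {f : MvPolynomial σ K}
    (hf : f ∈ vanishingIdeal K {p} ^ k) : Polynomial.X ^ k ∣ aeval y f := by
  have hle : (vanishingIdeal K {p}).map (aeval y) ≤ Ideal.span {Polynomial.X} :=
    Ideal.map_le_iff_le_comap.2 fun g hg => Ideal.mem_span_singleton.2 <| Polynomial.X_dvd_iff.2 <|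
      (coeff_zero_aeval hy g).trans ((mem_vanishingIdeal_singleton_iff p g).1 hg)
  rw [← Ideal.mem_span_singleton, ← Ideal.span_singleton_pow]
  exact (Ideal.map_pow (aeval y) _ k).trans_le (Ideal.pow_right_mono hle k)
    (Ideal.mem_map_of_mem _ hf)

theorem X_sub_C_mem_vanishingIdeal (p : σ → K) (i : σ) : X i - C (p i) ∈ vanishingIdeal K {p} :=
  (mem_vanishingIdeal_singleton_iff p _).2 (by simp)

variable [Fintype σ]

theorem sub_linFormAt_mem_vanishingIdeal_sq {p : σ → K} {f : MvPolynomial σ K}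
    (hf : aeval p f = 0) : f - linFormAt p (polyGradient f p) ∈ vanishingIdeal K {p} ^ 2 := by
  have hTaylor := aeval_add_sub_sub_polyGradient_mem_sq (x := fun i => C (p i))
    (X_sub_C_mem_vanishingIdeal p) f
  convert hTaylor using 2
  · have hX : (fun i => C (p i)) + (fun i => X i - C (p i)) = (X : σ → MvPolynomial σ K) :=
      funext fun i => add_sub_cancel _ _
    rw [hX, aeval_X_left_apply, aeval_C_comp, hf, map_zero, sub_zero]
  · simp only [linFormAt_apply, dotProduct, polyGradient, aeval_C_comp, smul_eq_C_mul]

theorem submodule_eq_top_of_dotProduct {V : Submodule K (σ → K)}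
    (hV : ∀ u : σ → K, (∀ v ∈ V, v ⬝ᵥ u = 0) → u = 0) : V = ⊤ := by
  classical
  by_contra hne
  obtain ⟨φ, hφ, hle⟩ := V.exists_le_ker_of_lt_top (lt_top_iff_ne_top.2 hne)
  obtain ⟨u, rfl⟩ := (dotProductEquiv K σ).surjective φ
  have hu : u = 0 := hV u fun v hv => (dotProduct_comm v u).trans (hle hv)
  exact hφ (by rw [hu, map_zero])

/-- The system `G` has at its solution `p` a tangent space of dimension at most one, and there `L`
is a coordinate on it: `L` vanishes at `p` and its differential is injective on the kernel of the
Jacobian of `G`. -/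
structure IsLocalParameter (G : ι → MvPolynomial σ K) (p : σ → K) (L : MvPolynomial σ K) :
    Prop where
  system_eq_zero : ∀ r, aeval p (G r) = 0
  eq_zero : aeval p L = 0
  injective : ∀ u, polyJacobian G p *ᵥ u = 0 → polyGradient L p ⬝ᵥ u = 0 → u = 0

namespace IsLocalParameter

variable {G : ι → MvPolynomial σ K} {p : σ → K} {L : MvPolynomial σ K}

theorem mem_vanishingIdeal (h : IsLocalParameter G p L) : L ∈ vanishingIdeal K {p} :=
  (mem_vanishingIdeal_singleton_iff p L).2 h.eq_zero

theorem span_le_vanishingIdeal (h : IsLocalParameter G p L) :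
    Ideal.span (Set.range G) ≤ vanishingIdeal K {p} :=
  Ideal.span_le.2 <| Set.range_subset_iff.2 fun r =>
    (mem_vanishingIdeal_singleton_iff p _).2 (h.system_eq_zero r)

theorem vanishingIdeal_le_sup_sq (h : IsLocalParameter G p L) :
    vanishingIdeal K {p} ≤
      Ideal.span (Set.range G) ⊔ Ideal.span {L} ⊔ vanishingIdeal K {p} ^ 2 := by
  set J := Ideal.span (Set.range G) ⊔ Ideal.span {L} ⊔ vanishingIdeal K {p} ^ 2
  let V : Submodule K (σ → K) := (J.restrictScalars K).comap (linFormAt p)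
  have hgrad {f : MvPolynomial σ K} (hf : f ∈ Ideal.span (Set.range G) ⊔ Ideal.span {L})
      (hfp : aeval p f = 0) : polyGradient f p ∈ V :=
    (J.sub_mem_iff_right (Ideal.mem_sup_left hf)).1
      (Ideal.mem_sup_right (sub_linFormAt_mem_vanishingIdeal_sq hfp))
  have hV : V = ⊤ := submodule_eq_top_of_dotProduct fun u hu =>
    h.injective u
      (funext fun r => hu _ <| hgrad (Ideal.mem_sup_left (Ideal.subset_span ⟨r, rfl⟩))
        (h.system_eq_zero r))
      (hu _ <| hgrad (Ideal.mem_sup_right (Ideal.mem_span_singleton_self L)) h.eq_zero)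
  intro f hf
  have hlin : linFormAt p (polyGradient f p) ∈ J := by
    change polyGradient f p ∈ V
    exact hV ▸ Submodule.mem_top
  have hsq := sub_linFormAt_mem_vanishingIdeal_sq ((mem_vanishingIdeal_singleton_iff p f).1 hf)
  exact (J.sub_mem_iff_left hlin).1 (Ideal.mem_sup_right hsq)

theorem vanishingIdeal_le_sup_pow (h : IsLocalParameter G p L) (k : ℕ) :
    vanishingIdeal K {p} ≤
      Ideal.span (Set.range G) ⊔ Ideal.span {L} ⊔ vanishingIdeal K {p} ^ k := by
  set A := Ideal.span (Set.range G) ⊔ Ideal.span {L}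
  set 𝔪 := vanishingIdeal K {p}
  induction k with
  | zero => simp
  | succ k ih =>
    have hsq : 𝔪 ^ 2 ≤ A ⊔ 𝔪 ^ (k + 1) := calc
      𝔪 ^ 2 = 𝔪 * 𝔪 := sq 𝔪
      _ ≤ (A ⊔ 𝔪 ^ k) * 𝔪 := Ideal.mul_mono_left ih
      _ = A * 𝔪 ⊔ 𝔪 ^ (k + 1) := by rw [Ideal.sup_mul, pow_succ]
      _ ≤ A ⊔ 𝔪 ^ (k + 1) := sup_le_sup_right Ideal.mul_le_left _
    exact h.vanishingIdeal_le_sup_sq.trans (sup_le le_sup_left hsq)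

theorem exists_sub_mul_mem (h : IsLocalParameter G p L) (k : ℕ) (f : MvPolynomial σ K) :
    ∃ q, f - (C (aeval p f) + L * q) ∈
      Ideal.span (Set.range G) ⊔ vanishingIdeal K {p} ^ k := by
  have hf : f - C (aeval p f) ∈ vanishingIdeal K {p} :=
    (mem_vanishingIdeal_singleton_iff p _).2 (by simp)
  have hsup := h.vanishingIdeal_le_sup_pow k hf
  rw [sup_right_comm] at hsup
  obtain ⟨g, hg, _, hLq, hsum⟩ := Submodule.mem_sup.1 hsup
  obtain ⟨q, rfl⟩ := Ideal.mem_span_singleton.1 hLq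
  exact ⟨q, by rwa [← sub_sub, ← hsum, add_sub_cancel_right]⟩

theorem exists_sub_polynomial_aeval_mem (h : IsLocalParameter G p L) (k : ℕ)
    (f : MvPolynomial σ K) :
    ∃ P : K[X], f - Polynomial.aeval L P ∈
      Ideal.span (Set.range G) ⊔ vanishingIdeal K {p} ^ k := by
  set J := Ideal.span (Set.range G) ⊔ vanishingIdeal K {p} ^ k
  suffices hquot : ∀ d, ∃ (P : K[X]) (q : MvPolynomial σ K),
      f - (Polynomial.aeval L P + L ^ d * q) ∈ J by
    obtain ⟨P, q, hPq⟩ := hquot k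
    have hLk : L ^ k * q ∈ J :=
      J.mul_mem_right q (Ideal.mem_sup_right (Ideal.pow_mem_pow h.mem_vanishingIdeal k))
    rw [← sub_sub] at hPq
    exact ⟨P, (J.sub_mem_iff_left hLk).1 hPq⟩
  intro d
  induction d with
  | zero => exact ⟨0, f, by simp⟩
  | succ d ih =>
    obtain ⟨P, q, hPq⟩ := ih
    obtain ⟨q', hq'⟩ := h.exists_sub_mul_mem k q
    refine ⟨P + Polynomial.C (aeval p q) * Polynomial.X ^ d, q', ?_⟩
    convert J.add_mem hPq (J.mul_mem_left (L ^ d) hq') using 1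
    rw [map_add, map_mul, map_pow, Polynomial.aeval_C, Polynomial.aeval_X, algebraMap_eq]
    ring

theorem coeff_zero_eq_of_aeval_sub_mem (h : IsLocalParameter G p L) {P : K[X]}
    {f : MvPolynomial σ K} (hPf : f - Polynomial.aeval L P ∈ vanishingIdeal K {p}) :
    P.coeff 0 = aeval p f := by
  rw [mem_vanishingIdeal_singleton_iff, map_sub, sub_eq_zero, ← Polynomial.aeval_algHom_apply,
    h.eq_zero] at hPf
  rw [hPf, Polynomial.coeff_zero_eq_aeval_zero]

/-- The class of `L` generates the quotient by `J = I ⊔ 𝔪 ^ (k + 1)`, which is therefore a truncated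
polynomial ring; polynomials representing the coordinates in it form the required jet. -/
theorem exists_isJet_forall_aeval_mem_iff (h : IsLocalParameter G p L) (k : ℕ) :
    ∃ e y, IsJet G p L e y ∧ ∀ P : K[X],
      Polynomial.aeval L P ∈ Ideal.span (Set.range G) ⊔ vanishingIdeal K {p} ^ (k + 1) ↔
        Polynomial.X ^ e ∣ P := by
  set J := Ideal.span (Set.range G) ⊔ vanishingIdeal K {p} ^ (k + 1)
  have hJ : J ≤ vanishingIdeal K {p} :=
    sup_le h.span_le_vanishingIdeal (Ideal.pow_le_self k.succ_ne_zero)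
  obtain ⟨e, he⟩ : ∃ e, ∀ P : K[X], Polynomial.aeval L P ∈ J ↔ Polynomial.X ^ e ∣ P := by
    obtain ⟨g, hg⟩ := IsPrincipalIdealRing.principal
      (J.comap (Polynomial.aeval L : K[X] →ₐ[K] MvPolynomial σ K))
    have hmem (P : K[X]) : Polynomial.aeval L P ∈ J ↔ g ∣ P := by
      rw [← Ideal.mem_span_singleton, Ideal.span, ← hg, Ideal.mem_comap]
    have hXk : Polynomial.aeval L (Polynomial.X ^ (k + 1) : K[X]) ∈ J := by
      rw [map_pow, Polynomial.aeval_X]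
      exact Ideal.mem_sup_right (Ideal.pow_mem_pow h.mem_vanishingIdeal _)
    obtain ⟨e, -, he⟩ := (_root_.dvd_prime_pow Polynomial.prime_X _).1 ((hmem _).1 hXk)
    exact ⟨e, fun P => (hmem P).trans he.dvd_iff_dvd_left⟩
  choose y hy using fun i => h.exists_sub_polynomial_aeval_mem (k + 1) (X i)
  have hcomp (f : MvPolynomial σ K) : f - Polynomial.aeval L (aeval y f) ∈ J := by
    have hLy : Polynomial.aeval L (aeval y f) = aeval (fun i => Polynomial.aeval L (y i)) f :=
      comp_aeval_apply y (Polynomial.aeval L) f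
    simpa only [hLy, aeval_X_left_apply] using aeval_sub_aeval_mem hy f
  refine ⟨e, y, ⟨fun i => ?_, fun r => ?_, ?_⟩, he⟩
  · simpa using h.coeff_zero_eq_of_aeval_sub_mem (hJ (hy i))
  · have hG : G r ∈ J := Ideal.mem_sup_left (Ideal.subset_span ⟨r, rfl⟩)
    exact (he _).1 ((J.sub_mem_iff_right hG).1 (hcomp (G r)))
  · rw [← he, map_sub, Polynomial.aeval_X]
    exact sub_mem_comm_iff.1 (hcomp L)

theorem pow_mem_of_not_exists_isJet (h : IsLocalParameter G p L) {d : ℕ}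
    (hd : ¬ ∃ y, IsJet G p L (d + 1) y) (k : ℕ) :
    L ^ d ∈ Ideal.span (Set.range G) ⊔ vanishingIdeal K {p} ^ (k + 1) := by
  obtain ⟨e, y, hy, he⟩ := h.exists_isJet_forall_aeval_mem_iff k
  have hed : e ≤ d := by
    by_contra! hlt
    exact hd ⟨y, hy.mono hlt⟩
  simpa using (he (Polynomial.X ^ d)).2 (pow_dvd_pow _ hed)

end IsLocalParameter

end LocalParameter

section Taylor

variable {R σ : Type*} [CommRing R]

/-- The Taylor shift `f ↦ f (p + X)`, whose coefficients are the Taylor coefficients at `p`. -/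
noncomputable def taylorAt (p : σ → R) : MvPolynomial σ R ≃ₐ[R] MvPolynomial σ R :=
  AlgEquiv.ofAlgHom (aeval fun i => X i + C (p i)) (aeval fun i => X i - C (p i))
    (algHom_ext fun i => by simp [algHom_C]) (algHom_ext fun i => by simp [algHom_C])

theorem taylorAt_apply (p : σ → R) (f : MvPolynomial σ R) :
    taylorAt p f = aeval (fun i => X i + C (p i)) f := rfl

theorem coeff_zero_taylorAt (p : σ → R) (f : MvPolynomial σ R) :
    (taylorAt p f).coeff 0 = aeval p f := by
  rw [← constantCoeff_eq, taylorAt_apply, map_aeval]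
  simp [aeval_def]

/-- The monomials in the coordinates centred at `p`. -/
noncomputable def taylorBasis (p : σ → R) : Module.Basis (σ →₀ ℕ) R (MvPolynomial σ R) :=
  (basisMonomials σ R).map (taylorAt p).symm.toLinearEquiv

theorem taylorAt_taylorBasis (p : σ → R) (α : σ →₀ ℕ) :
    taylorAt p (taylorBasis p α) = monomial α 1 :=
  (taylorAt p).apply_symm_apply _

/-- The differential operator at `p` with a given coefficient vector, as a linear functional on
polynomials: a version of `applyOp` that is linear in both arguments. -/
noncomputable def diffOp (p : σ → R) : ((σ →₀ ℕ) →₀ R) →ₗ[R] MvPolynomial σ R →ₗ[R] R :=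
  Finsupp.linearCombination R fun α => lcoeff R α ∘ₗ (taylorAt p).toLinearMap

theorem diffOp_apply (p : σ → R) (c : (σ →₀ ℕ) →₀ R) (f : MvPolynomial σ R) :
    diffOp p c f = Finsupp.linearCombination R (fun α => (taylorAt p f).coeff α) c := by
  simp only [diffOp, Finsupp.linearCombination_apply, Finsupp.sum, LinearMap.sum_apply]
  rfl

theorem diffOp_taylorBasis (p : σ → R) (c : (σ →₀ ℕ) →₀ R) (α : σ →₀ ℕ) :
    diffOp p c (taylorBasis p α) = c α := by
  classical
  simp [diffOp_apply, Finsupp.linearCombination_apply, Finsupp.sum, taylorAt_taylorBasis,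
    coeff_monomial, eq_comm]

theorem diffOp_injective (p : σ → R) : Function.Injective (diffOp p) := fun c c' h =>
  Finsupp.ext fun α => by rw [← diffOp_taylorBasis p c, h, diffOp_taylorBasis]

end Taylor

section TaylorOrder

variable {K σ : Type*} [Field K]

theorem comap_taylorAt_idealOfVars (p : σ → K) :
    (idealOfVars σ K).comap (taylorAt p) = vanishingIdeal K {p} := by
  ext f
  rw [Ideal.mem_comap, ← pow_one (idealOfVars σ K), mem_pow_idealOfVars_iff',
    mem_vanishingIdeal_singleton_iff, ← coeff_zero_taylorAt]
  simp [Finsupp.degree_eq_zero_iff]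

theorem mem_vanishingIdeal_pow_iff_coeff_taylorAt {p : σ → K} {k : ℕ} {f : MvPolynomial σ K} :
    f ∈ vanishingIdeal K {p} ^ k ↔ ∀ α, α.degree < k → (taylorAt p f).coeff α = 0 := by
  let e : MvPolynomial σ K ≃+* MvPolynomial σ K := taylorAt p
  have hpow : vanishingIdeal K {p} ^ k = (idealOfVars σ K ^ k).comap e := by
    rw [← comap_taylorAt_idealOfVars, ← Ideal.map_symm, Ideal.map_pow, Ideal.map_symm]
    rfl
  rw [← mem_pow_idealOfVars_iff', hpow]
  rfl

theorem taylorBasis_mem_vanishingIdeal_pow (p : σ → K) {α : σ →₀ ℕ} {k : ℕ} (hα : k ≤ α.degree) :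
    taylorBasis p α ∈ vanishingIdeal K {p} ^ k := by
  classical
  refine mem_vanishingIdeal_pow_iff_coeff_taylorAt.2 fun β hβ => ?_
  rw [taylorAt_taylorBasis, coeff_monomial, if_neg]
  rintro rfl
  exact hβ.not_ge hα

theorem exists_forall_mem_pow_diffOp_eq_zero (p : σ → K) (c : (σ →₀ ℕ) →₀ K) :
    ∃ k, ∀ f ∈ vanishingIdeal K {p} ^ k, diffOp p c f = 0 := by
  refine ⟨c.support.sup Finsupp.degree + 1, fun f hf => ?_⟩
  rw [diffOp_apply, Finsupp.linearCombination_apply]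
  exact Finset.sum_eq_zero fun α hα => smul_eq_zero_of_right _ <|
    mem_vanishingIdeal_pow_iff_coeff_taylorAt.1 hf α (Nat.lt_succ_of_le (Finset.le_sup hα))

theorem exists_diffOp_eq [Finite σ] {p : σ → K} {k : ℕ} {φ : MvPolynomial σ K →ₗ[K] K}
    (hφ : ∀ f ∈ vanishingIdeal K {p} ^ k, φ f = 0) : ∃ c, diffOp p c = φ := by
  have hmem (α : σ →₀ ℕ) (hα : φ (taylorBasis p α) ≠ 0) :
      α ∈ (Finsupp.finite_of_degree_le k).toFinset := by
    by_contra hlt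
    rw [Set.Finite.mem_toFinset, Set.mem_ofPred_eq, not_le] at hlt
    exact hα (hφ _ (taylorBasis_mem_vanishingIdeal_pow p hlt.le))
  exact ⟨Finsupp.onFinset _ _ hmem, (taylorBasis p).ext fun α => diffOp_taylorBasis p _ α⟩

end TaylorOrder

section DualSpace

variable {σ : Type*} [Fintype σ] [DecidableEq σ]

theorem mem_dualSpace {p : σ → ℂ} {I : Ideal (MvPolynomial σ ℂ)} {c : (σ →₀ ℕ) →₀ ℂ} :
    c ∈ dualSpace p I ↔ ∀ f ∈ I, diffOp p c f = 0 := by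
  simp only [dualSpace, Submodule.mem_iInf, LinearMap.mem_ker, diffOp_apply]
  rfl

/-- The values of an operator in the dual space on the first `d` powers of `L`. -/
noncomputable def dualSpaceEvalPow (p : σ → ℂ) (I : Ideal (MvPolynomial σ ℂ))
    (L : MvPolynomial σ ℂ) (d : ℕ) : dualSpace p I →ₗ[ℂ] Fin d → ℂ :=
  LinearMap.pi fun i => (diffOp p).flip (L ^ (i : ℕ)) ∘ₗ (dualSpace p I).subtype

theorem dualSpaceEvalPow_apply {p : σ → ℂ} {I : Ideal (MvPolynomial σ ℂ)}
    (L : MvPolynomial σ ℂ) (d : ℕ) (c : dualSpace p I) (i : Fin d) :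
    dualSpaceEvalPow p I L d c i = diffOp p c (L ^ (i : ℕ)) := rfl

variable {ι : Type*} {G : ι → MvPolynomial σ ℂ} {p : σ → ℂ} {L : MvPolynomial σ ℂ}

theorem IsLocalParameter.dualSpaceEvalPow_injective (h : IsLocalParameter G p L) {d : ℕ}
    (hd : ¬ ∃ y, IsJet G p L (d + 1) y) :
    Function.Injective (dualSpaceEvalPow p (Ideal.span (Set.range G)) L d) := by
  refine (injective_iff_map_eq_zero _).2 fun c hc => ?_
  obtain ⟨k, hk⟩ := exists_forall_mem_pow_diffOp_eq_zero p (c : (σ →₀ ℕ) →₀ ℂ)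
  have hJ : ∀ f ∈ Ideal.span (Set.range G) ⊔ vanishingIdeal ℂ {p} ^ (k + 1),
      diffOp p c f = 0 := by
    intro f hf
    obtain ⟨g, hg, g', hg', rfl⟩ := Submodule.mem_sup.1 hf
    rw [map_add, mem_dualSpace.1 c.2 g hg, hk g' (Ideal.pow_le_pow_right k.le_succ hg'), add_zero]
  have hpow (i : ℕ) : diffOp p c (L ^ i) = 0 := by
    obtain hi | hi := lt_or_ge i d
    · exact congrFun hc ⟨i, hi⟩
    · rw [← Nat.add_sub_cancel' hi, pow_add]
      exact hJ _ (Ideal.mul_mem_right _ _ (h.pow_mem_of_not_exists_isJet hd k))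
  refine Subtype.ext (diffOp_injective p (LinearMap.ext fun f => ?_))
  obtain ⟨P, hP⟩ := h.exists_sub_polynomial_aeval_mem (k + 1) f
  have hfP : diffOp p c f = diffOp p c (Polynomial.aeval L P) :=
    sub_eq_zero.1 ((map_sub _ _ _).symm.trans (hJ _ hP))
  rw [hfP, Polynomial.aeval_eq_sum_range, map_sum]
  exact Finset.sum_eq_zero fun i _ => by rw [map_smul, hpow, smul_zero]

theorem IsJet.dualSpaceEvalPow_surjective {d : ℕ} {y : σ → ℂ[X]} (h : IsJet G p L d y) :
    Function.Surjective (dualSpaceEvalPow p (Ideal.span (Set.range G)) L d) := by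
  intro a
  let φ : MvPolynomial σ ℂ →ₗ[ℂ] ℂ :=
    ∑ j : Fin d, a j • (Polynomial.lcoeff ℂ j ∘ₗ (aeval y).toLinearMap)
  have hφ (f : MvPolynomial σ ℂ) : φ f = ∑ j : Fin d, a j * (aeval y f).coeff j := by
    simp [φ, LinearMap.sum_apply]
  have hφ0 {f : MvPolynomial σ ℂ} (hf : Polynomial.X ^ d ∣ aeval y f) : φ f = 0 := by
    rw [hφ]
    exact Finset.sum_eq_zero fun j _ => by rw [Polynomial.X_pow_dvd_iff.1 hf j j.2, mul_zero]
  obtain ⟨c, hc⟩ := exists_diffOp_eq (k := d) (φ := φ) (p := p) fun f hf =>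
    hφ0 (X_pow_dvd_aeval_of_mem_vanishingIdeal_pow h.coeff_zero hf)
  refine ⟨⟨c, mem_dualSpace.2 fun f hf => by rw [hc, hφ0 (h.dvd_aeval hf)]⟩, funext fun i => ?_⟩
  have hcoeff (j : Fin d) : (aeval y (L ^ (i : ℕ))).coeff j = if j = i then 1 else 0 := by
    have hsub := Polynomial.X_pow_dvd_iff.1 (h.dvd_aeval_pow_sub i) j j.2
    rw [Polynomial.coeff_sub, sub_eq_zero] at hsub
    simp only [hsub, Polynomial.coeff_X_pow, Fin.ext_iff]
  rw [dualSpaceEvalPow_apply, hc, hφ]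
  simp only [hcoeff, mul_ite, mul_one, mul_zero, Finset.sum_ite_eq', Finset.mem_univ, if_true]

theorem IsLocalParameter.finrank_dualSpace_eq_succ_iff (h : IsLocalParameter G p L) (d : ℕ) :
    Module.finrank ℂ (dualSpace p (Ideal.span (Set.range G))) = d + 1 ↔
      (∃ y, IsJet G p L (d + 1) y) ∧ ¬ ∃ y, IsJet G p L (d + 2) y := by
  constructor
  · intro hd
    have : Module.Finite ℂ (dualSpace p (Ideal.span (Set.range G))) :=
      FiniteDimensional.of_finrank_pos (K := ℂ)
        (V := dualSpace p (Ideal.span (Set.range G))) (by omega)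
    constructor
    · by_contra hjet
      have hle := LinearMap.finrank_le_finrank_of_injective (h.dualSpaceEvalPow_injective hjet)
      rw [Module.finrank_fin_fun] at hle
      omega
    · rintro ⟨y, hy⟩
      have hle := LinearMap.finrank_le_finrank_of_surjective hy.dualSpaceEvalPow_surjective
      rw [Module.finrank_fin_fun] at hle
      omega
  · rintro ⟨⟨y, hy⟩, hjet⟩
    exact (LinearEquiv.ofBijective _ ⟨h.dualSpaceEvalPow_injective hjet,
      hy.dualSpaceEvalPow_surjective⟩).finrank_eq.trans (Module.finrank_fin_fun ℂ)

end DualSpace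

section Deflation

variable {R B σ ι : Type*} [CommRing R] [CommRing B] [Algebra R B] [Fintype σ]

theorem aeval_sum_rename_inl_mul_X (a : σ → MvPolynomial σ R) (x v : σ → B) :
    aeval (Sum.elim x v) (∑ j, rename Sum.inl (a j) * X (Sum.inr j)) =
      (fun j => aeval x (a j)) ⬝ᵥ v := by
  simp [dotProduct, aeval_rename]

theorem polyGradient_sum_rename_inl_mul_X_comp_inr (a : σ → MvPolynomial σ R) (z : σ ⊕ σ → B) :
    polyGradient (∑ j, rename Sum.inl (a j) * X (Sum.inr j)) z ∘ Sum.inr =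
      fun j => aeval (z ∘ Sum.inl) (a j) := by
  classical
  have hsum (f : σ → MvPolynomial (σ ⊕ σ) R) :
      polyGradient (∑ j, f j) z = ∑ j, polyGradient (f j) z := by
    funext k
    simp only [polyGradient, map_sum, Finset.sum_apply]
  funext k
  simp [hsum, polyGradient_mul_X, polyGradient_rename_inl, aeval_rename, Pi.single_apply]

/-- The system in the variables `(x, v)` obtained from `F` by adjoining the equations
`F'(x) v = 0` and `ℓ ⬝ᵥ v = 1`. The system `deflSys F h` is the case of a square system in which
`ℓ` is the conjugate of `h`. -/
noncomputable def deflation (F : ι → MvPolynomial σ R) (ℓ : σ → R) :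
    ι ⊕ (ι ⊕ Unit) → MvPolynomial (σ ⊕ σ) R :=
  Sum.elim (fun i => rename Sum.inl (F i))
    (Sum.elim (fun i => ∑ j, rename Sum.inl (pderiv j (F i)) * X (Sum.inr j))
      fun _ => ∑ j, C (ℓ j) * X (Sum.inr j) - 1)

theorem deflation_inr_inr (F : ι → MvPolynomial σ R) (ℓ : σ → R) (u : Unit) :
    deflation F ℓ (Sum.inr (Sum.inr u)) =
      ∑ j, rename Sum.inl (C (ℓ j)) * X (Sum.inr j) - C 1 := by
  simp only [deflation, Sum.elim_inr, rename_C, C_1]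

variable (F : ι → MvPolynomial σ R) (ℓ : σ → R) (x v : σ → B)

theorem aeval_deflation_inl (i : ι) :
    aeval (Sum.elim x v) (deflation F ℓ (Sum.inl i)) = aeval x (F i) :=
  aeval_rename _ _ _

theorem aeval_deflation_inr_inl (i : ι) :
    aeval (Sum.elim x v) (deflation F ℓ (Sum.inr (Sum.inl i))) = (polyJacobian F x *ᵥ v) i :=
  aeval_sum_rename_inl_mul_X _ x v

theorem aeval_deflation_inr_inr (u : Unit) :
    aeval (Sum.elim x v) (deflation F ℓ (Sum.inr (Sum.inr u))) =
      (algebraMap R B ∘ ℓ) ⬝ᵥ v - 1 := by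
  rw [deflation_inr_inr, map_sub, aeval_sum_rename_inl_mul_X, aeval_C, map_one]
  simp only [aeval_C]
  rfl

theorem polyGradient_deflation_inr_inl_comp_inr (z : σ ⊕ σ → B) (i : ι) :
    polyGradient (deflation F ℓ (Sum.inr (Sum.inl i))) z ∘ Sum.inr =
      polyGradient (F i) (z ∘ Sum.inl) :=
  polyGradient_sum_rename_inl_mul_X_comp_inr _ z

theorem polyGradient_deflation_inr_inr_comp_inr (z : σ ⊕ σ → B) (u : Unit) :
    polyGradient (deflation F ℓ (Sum.inr (Sum.inr u))) z ∘ Sum.inr = algebraMap R B ∘ ℓ := by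
  rw [deflation_inr_inr, sub_eq_add_neg, ← map_neg, polyGradient_add, polyGradient_C, add_zero,
    polyGradient_sum_rename_inl_mul_X_comp_inr]
  funext j
  rw [aeval_C, Function.comp_apply]

end Deflation

theorem isJet_deflation_iff {R σ ι : Type*} [CommRing R] [Fintype σ] {F : ι → MvPolynomial σ R}
    {p ℓ ν : σ → R} {L : MvPolynomial σ R} {d : ℕ} {x v : σ → R[X]} :
    IsJet (deflation F ℓ) (Sum.elim p ν) (rename Sum.inl L) d (Sum.elim x v) ↔
      IsJet F p L d x ∧ (∀ j, (v j).coeff 0 = ν j) ∧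
        (∀ i, Polynomial.X ^ d ∣ (polyJacobian F x *ᵥ v) i) ∧
          Polynomial.X ^ d ∣ (algebraMap R R[X] ∘ ℓ) ⬝ᵥ v - 1 := by
  constructor
  · rintro ⟨h0, hG, hL⟩
    refine ⟨⟨fun j => h0 (Sum.inl j), fun i => ?_, ?_⟩, fun j => h0 (Sum.inr j), fun i => ?_, ?_⟩
    · simpa only [aeval_deflation_inl] using hG (Sum.inl i)
    · simpa only [aeval_rename, Sum.elim_comp_inl] using hL
    · simpa only [aeval_deflation_inr_inl] using hG (Sum.inr (Sum.inl i))
    · simpa only [aeval_deflation_inr_inr] using hG (Sum.inr (Sum.inr ()))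
  · rintro ⟨h, hv0, hJ, hℓ⟩
    refine ⟨Sum.rec h.coeff_zero hv0, ?_, ?_⟩
    · rintro (i | i | u)
      · simpa only [aeval_deflation_inl] using h.dvd_system i
      · simpa only [aeval_deflation_inr_inl] using hJ i
      · simpa only [aeval_deflation_inr_inr] using hℓ
    · simpa only [aeval_rename, Sum.elim_comp_inl] using h.dvd_parameter

section DeflationJet

variable {K σ ι : Type*} [Field K] [Fintype σ] {F : ι → MvPolynomial σ K} {p ℓ ν : σ → K}

theorem isLocalParameter_linFormAt_of_ker_eq_span {r : σ → K} (hF : ∀ i, aeval p (F i) = 0)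
    (hker : LinearMap.ker (polyJacobian F p).mulVecLin = Submodule.span K {r})
    (hr : ℓ ⬝ᵥ r ≠ 0) : IsLocalParameter F p (linFormAt p ℓ) where
  system_eq_zero := hF
  eq_zero := aeval_linFormAt_self p ℓ
  injective u hu hℓu := by
    obtain ⟨a, rfl⟩ : ∃ a : K, a • r = u := by
      rw [← Submodule.mem_span_singleton, ← hker]
      exact hu
    have hr' : polyGradient (linFormAt p ℓ) p ⬝ᵥ r ≠ 0 := by rwa [polyGradient_linFormAt]
    rw [dotProduct_smul, smul_eq_mul] at hℓu
    rw [(mul_eq_zero.1 hℓu).resolve_right hr', zero_smul]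

theorem IsLocalParameter.eq_of_mulVec_eq_of_dotProduct_eq (h : IsLocalParameter F p (linFormAt p ℓ))
    {u v : σ → K} (hJ : polyJacobian F p *ᵥ u = polyJacobian F p *ᵥ v) (hℓ : ℓ ⬝ᵥ u = ℓ ⬝ᵥ v) :
    u = v := by
  refine sub_eq_zero.1 (h.injective _ (by rw [mulVec_sub, hJ, sub_self]) ?_)
  rw [polyGradient_linFormAt, dotProduct_sub]
  exact sub_eq_zero.2 hℓ

theorem IsLocalParameter.isLocalParameter_deflation
    (h : IsLocalParameter F p (linFormAt p ℓ))
    (hν : polyJacobian F p *ᵥ ν = 0) (hℓν : ℓ ⬝ᵥ ν = 1) :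
    IsLocalParameter (deflation F ℓ) (Sum.elim p ν) (rename Sum.inl (linFormAt p ℓ)) where
  system_eq_zero := by
    rintro (i | i | u)
    · rw [aeval_deflation_inl, h.system_eq_zero]
    · rw [aeval_deflation_inr_inl, hν, Pi.zero_apply]
    · rw [aeval_deflation_inr_inr]
      exact sub_eq_zero.2 hℓν
  eq_zero := (aeval_rename _ _ _).trans h.eq_zero
  injective := by
    intro w hJw hℓw
    obtain ⟨u, v, rfl⟩ : ∃ u v, w = Sum.elim u v := ⟨_, _, (Sum.elim_comp_inl_inr w).symm⟩
    rw [polyGradient_rename_inl, sumElim_dotProduct_sumElim, zero_dotProduct, add_zero] at hℓw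
    have hu : u = 0 := by
      refine h.injective u (funext fun i => ?_) hℓw
      have hi : polyGradient (rename Sum.inl (F i)) (Sum.elim p ν) ⬝ᵥ Sum.elim u v = 0 :=
        congrFun hJw (Sum.inl i)
      rwa [polyGradient_rename_inl, sumElim_dotProduct_sumElim, zero_dotProduct, add_zero] at hi
    subst hu
    have hrow (r : ι ⊕ Unit) :
        (polyGradient (deflation F ℓ (Sum.inr r)) (Sum.elim p ν) ∘ Sum.inr) ⬝ᵥ v = 0 := by
      have hr : polyGradient (deflation F ℓ (Sum.inr r)) (Sum.elim p ν) ⬝ᵥ Sum.elim 0 v = 0 :=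
        congrFun hJw (Sum.inr r)
      rwa [← Sum.elim_comp_inl_inr (polyGradient _ _), sumElim_dotProduct_sumElim,
        dotProduct_zero, zero_add] at hr
    have hv : v = 0 := by
      refine h.injective v (funext fun i => ?_) ?_
      · have hi := hrow (Sum.inl i)
        rwa [polyGradient_deflation_inr_inl_comp_inr] at hi
      · have hℓ := hrow (Sum.inr ())
        rwa [polyGradient_deflation_inr_inr_comp_inr, ← polyGradient_linFormAt p] at hℓ
    rw [hv]
    exact Sum.elim_zero_zero

theorem IsLocalParameter.X_pow_dvd {L : MvPolynomial σ K} (h : IsLocalParameter F p L) {d : ℕ}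
    {x w : σ → K[X]} (hx : ∀ j, (x j).coeff 0 = p j)
    (hF : ∀ i, Polynomial.X ^ d ∣ (polyJacobian F x *ᵥ w) i)
    (hL : Polynomial.X ^ d ∣ polyGradient L x ⬝ᵥ w) (j : σ) : Polynomial.X ^ d ∣ w j := by
  refine X_pow_dvd_of_X_pow_dvd_mulVec
    (M := polyJacobian (Sum.elim F fun _ : Unit => L) x) (fun u hu => ?_)
    (Sum.rec hF fun _ => hL) j
  rw [polyJacobian_map_constantCoeff hx] at hu
  exact h.injective u (funext fun i => congrFun hu (Sum.inl i)) (congrFun hu (Sum.inr ()))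

theorem IsLocalParameter.X_pow_succ_dvd_sub [CharZero K] {L : MvPolynomial σ K}
    (h : IsLocalParameter F p L) {d : ℕ} {x y : σ → K[X]} (hx : IsJet F p L (d + 1) x)
    (hy0 : ∀ j, (y j).coeff 0 = p j)
    (hF : ∀ i, Polynomial.X ^ d ∣ (polyJacobian F x *ᵥ fun j => Polynomial.derivative (y j)) i)
    (hL : Polynomial.X ^ d ∣ (polyGradient L x ⬝ᵥ fun j => Polynomial.derivative (y j)) - 1)
    (j : σ) : Polynomial.X ^ (d + 1) ∣ y j - x j := by
  have hvelocity :
      Polynomial.X ^ d ∣ Polynomial.derivative (y j) - Polynomial.derivative (x j) := by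
    refine h.X_pow_dvd
      (w := (fun j => Polynomial.derivative (y j)) - fun j => Polynomial.derivative (x j))
      hx.coeff_zero (fun i => ?_) ?_ j
    · have hi := X_pow_dvd_derivative_of_X_pow_succ_dvd (hx.dvd_system i)
      rw [derivative_aeval] at hi
      rw [mulVec_sub]
      exact dvd_sub (hF i) hi
    · have hLx := X_pow_dvd_derivative_of_X_pow_succ_dvd hx.dvd_parameter
      rw [Polynomial.derivative_sub, Polynomial.derivative_X, derivative_aeval] at hLx
      rw [dotProduct_sub, ← sub_sub_sub_cancel_right _ _ 1]
      exact dvd_sub hL hLx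
  refine X_pow_succ_dvd_of_X_pow_dvd_derivative ?_ ?_
  · rw [Polynomial.coeff_sub, hx.coeff_zero, hy0, sub_self]
  · rwa [Polynomial.derivative_sub]

theorem IsLocalParameter.isJet_deflation_derivative (h : IsLocalParameter F p (linFormAt p ℓ))
    (hν : polyJacobian F p *ᵥ ν = 0) (hℓν : ℓ ⬝ᵥ ν = 1) {d : ℕ} {x : σ → K[X]}
    (hx : IsJet F p (linFormAt p ℓ) (d + 2) x) :
    IsJet (deflation F ℓ) (Sum.elim p ν) (rename Sum.inl (linFormAt p ℓ)) (d + 1)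
      (Sum.elim x fun j => Polynomial.derivative (x j)) := by
  set v : σ → K[X] := fun j => Polynomial.derivative (x j)
  have hJ (i : ι) : Polynomial.X ^ (d + 1) ∣ (polyJacobian F x *ᵥ v) i := by
    have hi := X_pow_dvd_derivative_of_X_pow_succ_dvd (hx.dvd_system i)
    rwa [derivative_aeval] at hi
  have hℓ : Polynomial.X ^ (d + 1) ∣ (algebraMap K K[X] ∘ ℓ) ⬝ᵥ v - 1 := by
    have hL := X_pow_dvd_derivative_of_X_pow_succ_dvd hx.dvd_parameter
    rwa [Polynomial.derivative_sub, Polynomial.derivative_X, derivative_aeval,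
      polyGradient_linFormAt] at hL
  have hv0 : Polynomial.constantCoeff ∘ v = ν := by
    apply h.eq_of_mulVec_eq_of_dotProduct_eq
    · rw [hν, ← polyJacobian_map_constantCoeff hx.coeff_zero]
      funext i
      exact (RingHom.map_mulVec _ _ _ i).symm.trans
        (Polynomial.X_pow_dvd_iff.1 (hJ i) 0 d.succ_pos)
    · have hℓ0 := Polynomial.X_pow_dvd_iff.1 hℓ 0 d.succ_pos
      rw [Polynomial.coeff_sub, Polynomial.coeff_one_zero, sub_eq_zero] at hℓ0
      rw [hℓν, ← hℓ0]
      simp [dotProduct, Polynomial.mul_coeff_zero]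
  exact isJet_deflation_iff.2 ⟨hx.mono (Nat.le_succ _), congrFun hv0, hJ, hℓ⟩

theorem IsLocalParameter.exists_isJet_of_isJet_deflation [CharZero K]
    (h : IsLocalParameter F p (linFormAt p ℓ)) {d : ℕ} {x v : σ → K[X]}
    (hxv : IsJet (deflation F ℓ) (Sum.elim p ν) (rename Sum.inl (linFormAt p ℓ)) (d + 1)
      (Sum.elim x v)) :
    ∃ y, IsJet F p (linFormAt p ℓ) (d + 2) y := by
  obtain ⟨hx, -, hJ, hℓ⟩ := isJet_deflation_iff.1 hxv
  choose y hy0 hyv using fun j => exists_coeff_zero_eq_and_derivative_eq (p j) (v j)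
  obtain rfl : (fun j => Polynomial.derivative (y j)) = v := funext hyv
  have hpow : (Polynomial.X : K[X]) ^ d ∣ Polynomial.X ^ (d + 1) := pow_dvd_pow _ d.le_succ
  have hyx (j : σ) : y j - x j ∈ Ideal.span {(Polynomial.X : K[X]) ^ (d + 1)} :=
    Ideal.mem_span_singleton.2 <| h.X_pow_succ_dvd_sub hx hy0 (fun i => hpow.trans (hJ i))
      (by rw [polyGradient_linFormAt]; exact hpow.trans hℓ) j
  refine ⟨y, hy0, fun i => X_pow_succ_dvd_of_X_pow_dvd_derivative ?_ ?_,
    X_pow_succ_dvd_of_X_pow_dvd_derivative ?_ ?_⟩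
  · rw [coeff_zero_aeval hy0, h.system_eq_zero]
  · rw [derivative_aeval]
    exact (dvd_iff_dvd_of_dvd_sub <| Ideal.mem_span_singleton.1 <|
      polyGradient_dotProduct_sub_mem hyx (F i) _).2 (hJ i)
  · rw [Polynomial.coeff_sub, coeff_zero_aeval hy0, h.eq_zero, Polynomial.coeff_X_zero, sub_zero]
  · rwa [Polynomial.derivative_sub, Polynomial.derivative_X, derivative_aeval,
      polyGradient_linFormAt]

theorem IsLocalParameter.exists_isJet_deflation_iff [CharZero K]
    (h : IsLocalParameter F p (linFormAt p ℓ)) (hν : polyJacobian F p *ᵥ ν = 0)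
    (hℓν : ℓ ⬝ᵥ ν = 1) {d : ℕ} :
    (∃ z, IsJet (deflation F ℓ) (Sum.elim p ν) (rename Sum.inl (linFormAt p ℓ)) (d + 1) z) ↔
      ∃ x, IsJet F p (linFormAt p ℓ) (d + 2) x := by
  constructor
  · rintro ⟨z, hz⟩
    rw [← Sum.elim_comp_inl_inr z] at hz
    exact h.exists_isJet_of_isJet_deflation hz
  · rintro ⟨x, hx⟩
    exact ⟨_, h.isJet_deflation_derivative hν hℓν hx⟩

end DeflationJet

theorem forall_mem_span_range_eval_eq_zero_iff {R σ ι : Type*} [CommRing R]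
    {G : ι → MvPolynomial σ R} {q : σ → R} :
    (∀ f ∈ Ideal.span (Set.range G), eval q f = 0) ↔ ∀ r, aeval q (G r) = 0 := by
  have hspan := Ideal.span_le (s := Set.range G) (I := RingHom.ker (eval q))
  rw [Set.range_subset_iff] at hspan
  exact hspan

section Isolation

variable {K σ ι : Type*} [Field K] [Fintype σ] {F : ι → MvPolynomial σ K} {p ℓ ν : σ → K}

theorem IsLocalParameter.eventually_eq_of_deflation_eq_zero [TopologicalSpace K]
    (h : IsLocalParameter F p (linFormAt p ℓ)) (hν : polyJacobian F p *ᵥ ν = 0)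
    (hℓν : ℓ ⬝ᵥ ν = 1) (hp : ∀ᶠ x in nhds p, (∀ i, aeval x (F i) = 0) → x = p) :
    ∀ᶠ z in nhds (Sum.elim p ν), (∀ r, aeval z (deflation F ℓ r) = 0) → z = Sum.elim p ν := by
  have hinl : Filter.Tendsto (fun z : σ ⊕ σ → K => z ∘ Sum.inl) (nhds (Sum.elim p ν)) (nhds p) :=
    Continuous.tendsto' (by fun_prop) _ _ (Sum.elim_comp_inl p ν)
  filter_upwards [hinl.eventually hp] with z hz hzero
  obtain ⟨x, v, rfl⟩ : ∃ x v, z = Sum.elim x v := ⟨_, _, (Sum.elim_comp_inl_inr z).symm⟩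
  obtain rfl : x = p := hz fun i => (aeval_deflation_inl F ℓ x v i).symm.trans (hzero _)
  have hv : v = ν := by
    apply h.eq_of_mulVec_eq_of_dotProduct_eq
    · rw [hν]
      exact funext fun i => (aeval_deflation_inr_inl F ℓ x v i).symm.trans (hzero _)
    · rw [hℓν]
      exact sub_eq_zero.1 ((aeval_deflation_inr_inr F ℓ x v ()).symm.trans (hzero _))
  rw [hv]

end Isolation

section Complex

variable {σ ι : Type*} [Fintype σ] {F : ι → MvPolynomial σ ℂ} {p ℓ ν : σ → ℂ}

theorem IsLocalParameter.finrank_dualSpace_deflation_iff [DecidableEq σ]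
    (h : IsLocalParameter F p (linFormAt p ℓ)) (hν : polyJacobian F p *ᵥ ν = 0)
    (hℓν : ℓ ⬝ᵥ ν = 1) {d : ℕ} :
    Module.finrank ℂ (dualSpace (Sum.elim p ν) (Ideal.span (Set.range (deflation F ℓ)))) = d + 1 ↔
      Module.finrank ℂ (dualSpace p (Ideal.span (Set.range F))) = d + 2 := by
  rw [(h.isLocalParameter_deflation hν hℓν).finrank_dualSpace_eq_succ_iff,
    h.finrank_dualSpace_eq_succ_iff, h.exists_isJet_deflation_iff hν hℓν,
    h.exists_isJet_deflation_iff hν hℓν]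

end Complex

theorem dayton_zeng_breadth_one_deflation_general {ι σ : Type*} [Fintype σ] [DecidableEq σ]
    (F : ι → MvPolynomial σ ℂ) (p : σ → ℂ) (hzero : ∀ i, eval p (F i) = 0)
    (hisolated : ∀ᶠ q in nhds p, (∀ f ∈ Ideal.span (Set.range F), eval q f = 0) → q = p)
    (μ : ℕ) (hμ : μ = Module.finrank ℂ (dualSpace p (Ideal.span (Set.range F)))) (hμ2 : 2 ≤ μ)
    (r : σ → ℂ) (hker : LinearMap.ker (polyJacobian F p).mulVecLin = Submodule.span ℂ {r})
    (ℓ : σ → ℂ) (hℓ : ℓ ⬝ᵥ r ≠ 0) :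
    (∀ i, eval (Sum.elim p fun j => r j / ℓ ⬝ᵥ r) (deflation F ℓ i) = 0) ∧
    (∀ᶠ q in nhds (Sum.elim p fun j => r j / ℓ ⬝ᵥ r),
      (∀ f ∈ Ideal.span (Set.range (deflation F ℓ)), eval q f = 0) →
        q = Sum.elim p fun j => r j / ℓ ⬝ᵥ r) ∧
    Module.finrank ℂ (dualSpace (Sum.elim p fun j => r j / ℓ ⬝ᵥ r)
      (Ideal.span (Set.range (deflation F ℓ)))) = μ - 1 := by
  have h : IsLocalParameter F p (linFormAt p ℓ) :=
    isLocalParameter_linFormAt_of_ker_eq_span hzero hker hℓ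
  set ν : σ → ℂ := fun j => r j / ℓ ⬝ᵥ r
  have hν_eq : ν = (ℓ ⬝ᵥ r)⁻¹ • r := funext fun j => div_eq_inv_mul _ _
  have hν : polyJacobian F p *ᵥ ν = 0 := by
    have hr : polyJacobian F p *ᵥ r = 0 := by
      change r ∈ LinearMap.ker (polyJacobian F p).mulVecLin
      exact hker ▸ Submodule.mem_span_singleton_self r
    rw [hν_eq, mulVec_smul, hr, smul_zero]
  have hℓν : ℓ ⬝ᵥ ν = 1 := by rw [hν_eq, dotProduct_smul, smul_eq_mul, inv_mul_cancel₀ hℓ]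
  refine ⟨(h.isLocalParameter_deflation hν hℓν).system_eq_zero, ?_, ?_⟩
  · simp only [forall_mem_span_range_eval_eq_zero_iff] at hisolated ⊢
    exact h.eventually_eq_of_deflation_eq_zero hν hℓν hisolated
  · obtain ⟨d, rfl⟩ := Nat.exists_eq_add_of_le' hμ2
    exact (h.finrank_dualSpace_deflation_iff hν hℓν).2 hμ.symm

/-- (Dayton–Zeng conjecture, breadth one case.) Let `F` be a polynomial system with isolated
singular solution `x̂ₑ` of multiplicity `μ ≥ 2` whose Jacobian `F'(x̂ₑ)` has corank one with
unit null vector `r₁`. Then for any `h ∈ ℂⁿ` with `h*r₁ ≠ 0`, the deflated system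
`J(x,ν) = (F(x), F'(x)·ν, h*ν − 1)` has `(x̂ₑ, r₁/(h*r₁))` as an isolated singular solution
of multiplicity exactly `μ − 1`. -/
theorem dayton_zeng_breadth_one_deflation {n : ℕ}
    (F : Fin n → MvPolynomial (Fin n) ℂ) (xe : Fin n → ℂ)
    (hzero : ∀ i, MvPolynomial.eval xe (F i) = 0)
    (hisolated : ∀ᶠ q in nhds xe,
        (∀ f ∈ Ideal.span (Set.range F), MvPolynomial.eval q f = 0) → q = xe)
    (μ : ℕ) (hμ : μ = Module.finrank ℂ ↥(dualSpace xe (Ideal.span (Set.range F))))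
    (hμ2 : 2 ≤ μ)
    (r₁ : Fin n → ℂ) (hr₁ : ∑ i, ‖r₁ i‖ ^ 2 = 1)
    (hker : LinearMap.ker (Matrix.mulVecLin (jacMat F xe)) = Submodule.span ℂ {r₁})
    (h : Fin n → ℂ) (hh : ∑ j, starRingEnd ℂ (h j) * r₁ j ≠ 0) :
    (∀ r, MvPolynomial.eval
        (Sum.elim xe fun j => r₁ j / ∑ k, starRingEnd ℂ (h k) * r₁ k)
        (deflSys F h r) = 0) ∧
    (∀ᶠ q in nhds (Sum.elim xe fun j => r₁ j / ∑ k, starRingEnd ℂ (h k) * r₁ k),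
        (∀ f ∈ Ideal.span (Set.range (deflSys F h)), MvPolynomial.eval q f = 0) →
          q = Sum.elim xe fun j => r₁ j / ∑ k, starRingEnd ℂ (h k) * r₁ k) ∧
    Module.finrank ℂ
        ↥(dualSpace (Sum.elim xe fun j => r₁ j / ∑ k, starRingEnd ℂ (h k) * r₁ k)
          (Ideal.span (Set.range (deflSys F h)))) = μ - 1 := by
  exact dayton_zeng_breadth_one_deflation_general F xe hzero hisolated μ hμ hμ2 r₁ hker
    (fun j => starRingEnd ℂ (h j)) hh
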